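/- In any finite packing of unit balls in ℝ³, each ball touches at most 12 other balls of the packing. -/

import Mathlib

open scoped Classical

noncomputable section

/-- The Legendre polynomial of degree 1. -/
def leg1 (t : ℝ) : ℝ := 1 * t

/-- The Legendre polynomial of degree 2. -/
def leg2 (t : ℝ) : ℝ := (-(1/2)) + (3/2) * t ^ 2

/-- The Legendre polynomial of degree 3. -/
def leg3 (t : ℝ) : ℝ := (-(3/2)) * t + (5/2) * t ^ 3

/-- The Legendre polynomial of degree 4. -/
def leg4 (t : ℝ) : ℝ := (3/8) + (-(15/4)) * t ^ 2 + (35/8) * t ^ 4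

/-- The Legendre polynomial of degree 9. -/
def leg9 (t : ℝ) : ℝ := (315/128) * t + (-(1155/32)) * t ^ 3 + (9009/64) * t ^ 5 + (-(6435/32)) * t ^ 7 + (12155/128) * t ^ 9

lemma re_pow_step (u : ℂ) (n : ℕ) :
    (u ^ (n + 2)).re = 2 * u.re * (u ^ (n + 1)).re - Complex.normSq u * (u ^ n).re := by
  have h1 : (u ^ (n + 1)).re = (u ^ n).re * u.re - (u ^ n).im * u.im := by
    rw [pow_succ, Complex.mul_re]
  have h2 : (u ^ (n + 1)).im = (u ^ n).re * u.im + (u ^ n).im * u.re := by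
    rw [pow_succ, Complex.mul_im]
  have h3 : (u ^ (n + 2)).re = (u ^ (n + 1)).re * u.re - (u ^ (n + 1)).im * u.im := by
    rw [pow_succ, Complex.mul_re]
  rw [h3, h2, h1, Complex.normSq_apply]
  ring

lemma psd_sum {ι : Type*} (s : Finset ι) (A : ι → ℝ) (w : ι → ℂ) (m : ℕ) :
    0 ≤ ∑ i ∈ s, ∑ j ∈ s, A i * A j * ((w i * (starRingEnd ℂ) (w j)) ^ m).re := by
  have h : ∑ i ∈ s, ∑ j ∈ s, A i * A j * ((w i * (starRingEnd ℂ) (w j)) ^ m).re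
      = Complex.normSq (∑ i ∈ s, (A i : ℂ) * w i ^ m) := by
    have h2 : ((Complex.normSq (∑ i ∈ s, (A i : ℂ) * w i ^ m) : ℝ) : ℂ)
        = ∑ i ∈ s, ∑ j ∈ s, ((A i * A j : ℝ) : ℂ) * (w i * (starRingEnd ℂ) (w j)) ^ m := by
      rw [← Complex.mul_conj, map_sum, Finset.sum_mul_sum]
      refine Finset.sum_congr rfl fun i _ => Finset.sum_congr rfl fun j _ => ?_
      simp only [map_mul, map_pow, Complex.conj_ofReal, Complex.ofReal_mul]
      ring
    have h3 := congrArg Complex.re h2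
    rw [Complex.ofReal_re, Complex.re_sum] at h3
    rw [h3]
    refine Finset.sum_congr rfl fun i _ => ?_
    rw [Complex.re_sum]
    refine Finset.sum_congr rfl fun j _ => ?_
    rw [Complex.re_ofReal_mul]
  rw [h]
  exact Complex.normSq_nonneg _

lemma psd_of_expansion {ι : Type*} (s : Finset ι) (z : ι → ℝ) (w : ι → ℂ) (F : ι → ι → ℝ)
    (K : ℕ) (a : ℕ → ℝ) (ha : ∀ m, 0 ≤ a m) (Q : ℕ → ℝ → ℝ)
    (hF : ∀ i ∈ s, ∀ j ∈ s, F i j = ∑ m ∈ Finset.range K,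
      a m * (Q m (z i) * Q m (z j) * ((w i * (starRingEnd ℂ) (w j)) ^ m).re)) :
    0 ≤ ∑ i ∈ s, ∑ j ∈ s, F i j := by
  have h : ∑ i ∈ s, ∑ j ∈ s, F i j = ∑ m ∈ Finset.range K, a m * ∑ i ∈ s, ∑ j ∈ s,
      Q m (z i) * Q m (z j) * ((w i * (starRingEnd ℂ) (w j)) ^ m).re := by
    rw [Finset.sum_congr rfl fun i hi => Finset.sum_congr rfl fun j hj => hF i hi j hj]
    simp only [Finset.mul_sum]
    rw [Finset.sum_congr rfl fun i _ => Finset.sum_comm]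
    rw [Finset.sum_comm]
  rw [h]
  exact Finset.sum_nonneg fun m _ =>
    mul_nonneg (ha m) (psd_sum s (fun i => Q m (z i)) w m)

def coef1 : ℕ → ℝ
  | 0 => 1
  | 1 => 1
  | _ => 0

def quo1 : ℕ → ℝ → ℝ
  | 0, x => 1 * x
  | 1, _ => 1
  | _, _ => 0

lemma coef1_nonneg (m : ℕ) : 0 ≤ coef1 m := by
  unfold coef1
  split <;> norm_num

lemma leg1_expand (p q : ℝ) (u : ℂ) (hN : Complex.normSq u = (1 - p ^ 2) * (1 - q ^ 2)) :
    leg1 (p * q + u.re) = ∑ m ∈ Finset.range 2,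
      coef1 m * (quo1 m p * quo1 m q * (u ^ m).re) := by
  have r0 : (u ^ 0).re = 1 := by simp
  have r1 : (u ^ 1).re = u.re := by simp
  simp only [Finset.sum_range_succ, Finset.sum_range_zero, coef1, quo1, leg1, r1, r0]
  ring

def coef2 : ℕ → ℝ
  | 0 => (1/4)
  | 1 => 3
  | 2 => (3/4)
  | _ => 0

def quo2 : ℕ → ℝ → ℝ
  | 0, x => (-1) + 3 * x ^ 2
  | 1, x => 1 * x
  | 2, _ => 1
  | _, _ => 0

lemma coef2_nonneg (m : ℕ) : 0 ≤ coef2 m := by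
  unfold coef2
  split <;> norm_num

lemma leg2_expand (p q : ℝ) (u : ℂ) (hN : Complex.normSq u = (1 - p ^ 2) * (1 - q ^ 2)) :
    leg2 (p * q + u.re) = ∑ m ∈ Finset.range 3,
      coef2 m * (quo2 m p * quo2 m q * (u ^ m).re) := by
  have r0 : (u ^ 0).re = 1 := by simp
  have r1 : (u ^ 1).re = u.re := by simp
  have r2 := re_pow_step u 0
  simp only [Nat.reduceAdd, hN] at r2
  simp only [Finset.sum_range_succ, Finset.sum_range_zero, coef2, quo2, leg2, r2, r1, r0]
  ring

def coef3 : ℕ → ℝ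
  | 0 => (1/4)
  | 1 => (3/8)
  | 2 => (15/4)
  | 3 => (5/8)
  | _ => 0

def quo3 : ℕ → ℝ → ℝ
  | 0, x => (-3) * x + 5 * x ^ 3
  | 1, x => (-1) + 5 * x ^ 2
  | 2, x => 1 * x
  | 3, _ => 1
  | _, _ => 0

lemma coef3_nonneg (m : ℕ) : 0 ≤ coef3 m := by
  unfold coef3
  split <;> norm_num

lemma leg3_expand (p q : ℝ) (u : ℂ) (hN : Complex.normSq u = (1 - p ^ 2) * (1 - q ^ 2)) :
    leg3 (p * q + u.re) = ∑ m ∈ Finset.range 4,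
      coef3 m * (quo3 m p * quo3 m q * (u ^ m).re) := by
  have r0 : (u ^ 0).re = 1 := by simp
  have r1 : (u ^ 1).re = u.re := by simp
  have r2 := re_pow_step u 0
  have r3 := re_pow_step u 1
  simp only [Nat.reduceAdd, hN] at r2 r3
  simp only [Finset.sum_range_succ, Finset.sum_range_zero, coef3, quo3, leg3, r3, r2, r1, r0]
  ring

def coef4 : ℕ → ℝ
  | 0 => (1/64)
  | 1 => (5/8)
  | 2 => (5/16)
  | 3 => (35/8)
  | 4 => (35/64)
  | _ => 0

def quo4 : ℕ → ℝ → ℝ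
  | 0, x => 3 + (-30) * x ^ 2 + 35 * x ^ 4
  | 1, x => (-3) * x + 7 * x ^ 3
  | 2, x => (-1) + 7 * x ^ 2
  | 3, x => 1 * x
  | 4, _ => 1
  | _, _ => 0

lemma coef4_nonneg (m : ℕ) : 0 ≤ coef4 m := by
  unfold coef4
  split <;> norm_num

lemma leg4_expand (p q : ℝ) (u : ℂ) (hN : Complex.normSq u = (1 - p ^ 2) * (1 - q ^ 2)) :
    leg4 (p * q + u.re) = ∑ m ∈ Finset.range 5,
      coef4 m * (quo4 m p * quo4 m q * (u ^ m).re) := by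
  have r0 : (u ^ 0).re = 1 := by simp
  have r1 : (u ^ 1).re = u.re := by simp
  have r2 := re_pow_step u 0
  have r3 := re_pow_step u 1
  have r4 := re_pow_step u 2
  simp only [Nat.reduceAdd, hN] at r2 r3 r4
  simp only [Finset.sum_range_succ, Finset.sum_range_zero, coef4, quo4, leg4, r4, r3, r2, r1, r0]
  ring

def coef9 : ℕ → ℝ
  | 0 => (1/16384)
  | 1 => (45/16384)
  | 2 => (495/2048)
  | 3 => (1155/8192)
  | 4 => (45045/4096)
  | 5 => (1287/8192)
  | 6 => (2145/2048)
  | 7 => (6435/32768)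
  | 8 => (109395/16384)
  | 9 => (12155/32768)
  | _ => 0

def quo9 : ℕ → ℝ → ℝ
  | 0, x => 315 * x + (-4620) * x ^ 3 + 18018 * x ^ 5 + (-25740) * x ^ 7 + 12155 * x ^ 9
  | 1, x => 7 + (-308) * x ^ 2 + 2002 * x ^ 4 + (-4004) * x ^ 6 + 2431 * x ^ 8
  | 2, x => (-7) * x + 91 * x ^ 3 + (-273) * x ^ 5 + 221 * x ^ 7
  | 3, x => (-1) + 39 * x ^ 2 + (-195) * x ^ 4 + 221 * x ^ 6
  | 4, x => 1 * x + (-10) * x ^ 3 + 17 * x ^ 5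
  | 5, x => 1 + (-30) * x ^ 2 + 85 * x ^ 4
  | 6, x => (-3) * x + 17 * x ^ 3
  | 7, x => (-1) + 17 * x ^ 2
  | 8, x => 1 * x
  | 9, _ => 1
  | _, _ => 0

lemma coef9_nonneg (m : ℕ) : 0 ≤ coef9 m := by
  unfold coef9
  split <;> norm_num

lemma leg9_expand (p q : ℝ) (u : ℂ) (hN : Complex.normSq u = (1 - p ^ 2) * (1 - q ^ 2)) :
    leg9 (p * q + u.re) = ∑ m ∈ Finset.range 10,
      coef9 m * (quo9 m p * quo9 m q * (u ^ m).re) := by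
  have r0 : (u ^ 0).re = 1 := by simp
  have r1 : (u ^ 1).re = u.re := by simp
  have r2 := re_pow_step u 0
  have r3 := re_pow_step u 1
  have r4 := re_pow_step u 2
  have r5 := re_pow_step u 3
  have r6 := re_pow_step u 4
  have r7 := re_pow_step u 5
  have r8 := re_pow_step u 6
  have r9 := re_pow_step u 7
  simp only [Nat.reduceAdd, hN] at r2 r3 r4 r5 r6 r7 r8 r9
  simp only [Finset.sum_range_succ, Finset.sum_range_zero, coef9, quo9, leg9, r9, r8, r7, r6, r5, r4, r3, r2, r1, r0]
  ring

/-- The test polynomial. -/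
def kf (t : ℝ) : ℝ := 1 + (177/100) * leg1 t + (701/200) * leg2 t + (173/100) * leg3 t + (199/100) * leg4 t + (43/100) * leg9 t

lemma kf_eq (t : ℝ) : kf t = (-(1/160)) + (597/2560) * t + (-(441/200)) * t ^ 2 + (-(1433/128)) * t ^ 3 + (1393/160) * t ^ 4 + (387387/6400) * t ^ 5 + (-(55341/640)) * t ^ 7 + (104533/2560) * t ^ 9 := by
  unfold kf leg1 leg2 leg3 leg4 leg9
  ring

lemma kf_nonpos_0 (t : ℝ) (h1 : (-(442/625)) ≤ t) (h2 : t ≤ (-(41/100))) : 0 ≤ (1/160) + (-(597/2560)) * t + (441/200) * t ^ 2 + (1433/128) * t ^ 3 + (-(1393/160)) * t ^ 4 + (-(387387/6400)) * t ^ 5 + (55341/640) * t ^ 7 + (-(104533/2560)) * t ^ 9 := by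
  have e1 : 0 ≤ t - (-(442/625)) := by linarith
  have e2 : 0 ≤ (-(41/100)) - t := by linarith
  have h : (1/160) + (-(597/2560)) * t + (441/200) * t ^ 2 + (1433/128) * t ^ 3 + (-(1393/160)) * t ^ 4 + (-(387387/6400)) * t ^ 5 + (55341/640) * t ^ 7 + (-(104533/2560)) * t ^ 9 =
      (8837880490604987121484096512/345039907079791219381515715) * ((t - (-(442/625))) ^ 0 * ((-(41/100)) - t) ^ 9) +
      (3178848019002113856242567012480/69007981415958243876303143) * ((t - (-(442/625))) ^ 1 * ((-(41/100)) - t) ^ 8) +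
      (17027532708049547076312950176000/69007981415958243876303143) * ((t - (-(442/625))) ^ 2 * ((-(41/100)) - t) ^ 7) +
      (36444396101695824095775200700000/69007981415958243876303143) * ((t - (-(442/625))) ^ 3 * ((-(41/100)) - t) ^ 6) +
      (40220208437690194380679486875000/69007981415958243876303143) * ((t - (-(442/625))) ^ 4 * ((-(41/100)) - t) ^ 5) +
      (24216647882757898588701873046875/69007981415958243876303143) * ((t - (-(442/625))) ^ 5 * ((-(41/100)) - t) ^ 4) +
      (7519649337783032207172705078125/69007981415958243876303143) * ((t - (-(442/625))) ^ 6 * ((-(41/100)) - t) ^ 3) +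
      (7379612908537935365018310546875/552063851327665951010425144) * ((t - (-(442/625))) ^ 7 * ((-(41/100)) - t) ^ 2) +
      (23949491161886461700439453125/4416510810621327608083401152) * ((t - (-(442/625))) ^ 8 * ((-(41/100)) - t) ^ 1) +
      (2237868275106113596343994140625/35332086484970620864667209216) * ((t - (-(442/625))) ^ 9 * ((-(41/100)) - t) ^ 0) := by
    ring
  rw [h]
  positivity

lemma kf_nonpos_1 (t : ℝ) (h1 : (-(41/100)) ≤ t) (h2 : t ≤ (1/25)) : 0 ≤ (1/160) + (-(597/2560)) * t + (441/200) * t ^ 2 + (1433/128) * t ^ 3 + (-(1393/160)) * t ^ 4 + (-(387387/6400)) * t ^ 5 + (55341/640) * t ^ 7 + (-(104533/2560)) * t ^ 9 := by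
  have e1 : 0 ≤ t - (-(41/100)) := by linarith
  have e2 : 0 ≤ (1/25) - t := by linarith
  have h : (1/160) + (-(597/2560)) * t + (441/200) * t ^ 2 + (1433/128) * t ^ 3 + (-(1393/160)) * t ^ 4 + (-(387387/6400)) * t ^ 5 + (55341/640) * t ^ 7 + (-(104533/2560)) * t ^ 9 =
      (977739568515695071/645700815000000000) * ((t - (-(41/100))) ^ 0 * ((1/25) - t) ^ 9) +
      (1833062404073434507/53808401250000000) * ((t - (-(41/100))) ^ 1 * ((1/25) - t) ^ 8) +
      (451178964431432431/420378134765625) * ((t - (-(41/100))) ^ 2 * ((1/25) - t) ^ 7) +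
      (2453919942982512409/420378134765625) * ((t - (-(41/100))) ^ 3 * ((1/25) - t) ^ 6) +
      (5205065528791862056/420378134765625) * ((t - (-(41/100))) ^ 4 * ((1/25) - t) ^ 5) +
      (5103877249995518336/420378134765625) * ((t - (-(41/100))) ^ 5 * ((1/25) - t) ^ 4) +
      (782059689890152448/140126044921875) * ((t - (-(41/100))) ^ 6 * ((1/25) - t) ^ 3) +
      (420350760358163456/420378134765625) * ((t - (-(41/100))) ^ 7 * ((1/25) - t) ^ 2) +
      (7206195355869184/420378134765625) * ((t - (-(41/100))) ^ 8 * ((1/25) - t) ^ 1) +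
      (1896504940986368/1261134404296875) * ((t - (-(41/100))) ^ 9 * ((1/25) - t) ^ 0) := by
    ring
  rw [h]
  positivity

lemma kf_nonpos_2 (t : ℝ) (h1 : (1/25) ≤ t) (h2 : t ≤ (1/2)) : 0 ≤ (1/160) + (-(597/2560)) * t + (441/200) * t ^ 2 + (1433/128) * t ^ 3 + (-(1393/160)) * t ^ 4 + (-(387387/6400)) * t ^ 5 + (55341/640) * t ^ 7 + (-(104533/2560)) * t ^ 9 := by
  have e1 : 0 ≤ t - (1/25) := by linarith
  have e2 : 0 ≤ (1/2) - t := by linarith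
  have h : (1/160) + (-(597/2560)) * t + (441/200) * t ^ 2 + (1433/128) * t ^ 3 + (-(1393/160)) * t ^ 4 + (-(387387/6400)) * t ^ 5 + (55341/640) * t ^ 7 + (-(104533/2560)) * t ^ 9 =
      (11112333638592/9005763307315) * ((t - (1/25)) ^ 0 * ((1/2) - t) ^ 9) +
      (14551629884320/1801152661463) * ((t - (1/25)) ^ 1 * ((1/2) - t) ^ 8) +
      (1452431645549000/1801152661463) * ((t - (1/25)) ^ 2 * ((1/2) - t) ^ 7) +
      (11627130086125000/1801152661463) * ((t - (1/25)) ^ 3 * ((1/2) - t) ^ 6) +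
      (37993444808062500/1801152661463) * ((t - (1/25)) ^ 4 * ((1/2) - t) ^ 5) +
      (126676451361328125/3602305322926) * ((t - (1/25)) ^ 5 * ((1/2) - t) ^ 4) +
      (449584924658203125/14409221291704) * ((t - (1/25)) ^ 6 * ((1/2) - t) ^ 3) +
      (199857101318359375/14409221291704) * ((t - (1/25)) ^ 7 * ((1/2) - t) ^ 2) +
      (1123895989990234375/461095081334528) * ((t - (1/25)) ^ 8 * ((1/2) - t) ^ 1) +
      (430755615234375/922190162669056) * ((t - (1/25)) ^ 9 * ((1/2) - t) ^ 0) := by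
    ring
  rw [h]
  positivity

lemma kf_nonpos (t : ℝ) (h1 : (-(442/625)) ≤ t) (h2 : t ≤ (1/2)) : kf t ≤ 0 := by
  have key : 0 ≤ (1/160) + (-(597/2560)) * t + (441/200) * t ^ 2 + (1433/128) * t ^ 3 + (-(1393/160)) * t ^ 4 + (-(387387/6400)) * t ^ 5 + (55341/640) * t ^ 7 + (-(104533/2560)) * t ^ 9 := by
    by_cases c0 : t ≤ (-(41/100))
    · exact kf_nonpos_0 t (by linarith) c0
    by_cases c1 : t ≤ (1/25)
    · exact kf_nonpos_1 t (by linarith) c1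
    exact kf_nonpos_2 t (by linarith) (by linarith)
  rw [kf_eq]
  linarith

lemma kf_one_0 (t : ℝ) (h1 : (442/625) ≤ t) (h2 : t ≤ (99/100)) : 0 ≤ (10321/4000) + (597/2560) * t + (441/200) * t ^ 2 + (-(1433/128)) * t ^ 3 + (-(1393/160)) * t ^ 4 + (387387/6400) * t ^ 5 + (-(55341/640)) * t ^ 7 + (104533/2560) * t ^ 9 := by
  have e1 : 0 ≤ t - (442/625) := by linarith
  have e2 : 0 ≤ (99/100) - t := by linarith
  have h : (10321/4000) + (597/2560) * t + (441/200) * t ^ 2 + (-(1433/128)) * t ^ 3 + (-(1393/160)) * t ^ 4 + (387387/6400) * t ^ 5 + (-(55341/640)) * t ^ 7 + (104533/2560) * t ^ 9 =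
      (49103991689084354987121484096512/220670728377962674225599535) * ((t - (442/625)) ^ 0 * ((99/100) - t) ^ 9) +
      (85377496665221084481862151566720/44134145675592534845119907) * ((t - (442/625)) ^ 1 * ((99/100) - t) ^ 8) +
      (321920182311988921397876705696000/44134145675592534845119907) * ((t - (442/625)) ^ 2 * ((99/100) - t) ^ 7) +
      (97507630926853133144572881900000/6304877953656076406445701) * ((t - (442/625)) ^ 3 * ((99/100) - t) ^ 6) +
      (125687691728271344374790798125000/6304877953656076406445701) * ((t - (442/625)) ^ 4 * ((99/100) - t) ^ 5) +
      (98857318181899452781774537109375/6304877953656076406445701) * ((t - (442/625)) ^ 5 * ((99/100) - t) ^ 4) +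
      (44493314566434705153136279296875/6304877953656076406445701) * ((t - (442/625)) ^ 6 * ((99/100) - t) ^ 3) +
      (526800564288539815931539306640625/353073165404740278760959256) * ((t - (442/625)) ^ 7 * ((99/100) - t) ^ 2) +
      (181043481186017716569122314453125/2824585323237922230087674048) * ((t - (442/625)) ^ 8 * ((99/100) - t) ^ 1) +
      (28887184516158855565643310546875/22596682585903377840701392384) * ((t - (442/625)) ^ 9 * ((99/100) - t) ^ 0) := by
    ring
  rw [h]
  positivity

lemma kf_one_1 (t : ℝ) (h1 : (99/100) ≤ t) (h2 : t ≤ 1) : 0 ≤ (10321/4000) + (597/2560) * t + (441/200) * t ^ 2 + (-(1433/128)) * t ^ 3 + (-(1393/160)) * t ^ 4 + (387387/6400) * t ^ 5 + (-(55341/640)) * t ^ 7 + (104533/2560) * t ^ 9 := by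
  have e1 : 0 ≤ t - (99/100) := by linarith
  have e2 : 0 ≤ 1 - t := by linarith
  have h : (10321/4000) + (597/2560) * t + (441/200) * t ^ 2 + (-(1433/128)) * t ^ 3 + (-(1393/160)) * t ^ 4 + (387387/6400) * t ^ 5 + (-(55341/640)) * t ^ 7 + (104533/2560) * t ^ 9 =
      (37863010489019735167/2560) * ((t - (99/100)) ^ 0 * (1 - t) ^ 9) +
      (14284444891770479985/128) * ((t - (99/100)) ^ 1 * (1 - t) ^ 8) +
      375161470928505375 * ((t - (99/100)) ^ 2 * (1 - t) ^ 7) +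
      744657643220196875 * ((t - (99/100)) ^ 3 * (1 - t) ^ 6) +
      975452034161375000 * ((t - (99/100)) ^ 4 * (1 - t) ^ 5) +
      889811574625000000 * ((t - (99/100)) ^ 5 * (1 - t) ^ 4) +
      574291950000000000 * ((t - (99/100)) ^ 6 * (1 - t) ^ 3) +
      254779250000000000 * ((t - (99/100)) ^ 7 * (1 - t) ^ 2) +
      70150000000000000 * ((t - (99/100)) ^ 8 * (1 - t) ^ 1) +
      9000000000000000 * ((t - (99/100)) ^ 9 * (1 - t) ^ 0) := by
    ring
  rw [h]
  positivity

lemma kf_one (t : ℝ) (h1 : (442/625) ≤ t) (h2 : t ≤ 1) : kf (-t) ≤ (1287/500) := by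
  have key : 0 ≤ (10321/4000) + (597/2560) * t + (441/200) * t ^ 2 + (-(1433/128)) * t ^ 3 + (-(1393/160)) * t ^ 4 + (387387/6400) * t ^ 5 + (-(55341/640)) * t ^ 7 + (104533/2560) * t ^ 9 := by
    by_cases c0 : t ≤ (99/100)
    · exact kf_one_0 t (by linarith) c0
    exact kf_one_1 t (by linarith) (by linarith)
  rw [kf_eq]
  linarith

/-- Quadratic majorant. -/
def kq (s : ℝ) : ℝ := (26/5) * (s - (442/625)) + (73/4) * (s - (442/625)) ^ 2

lemma kf_quad_0 (t : ℝ) (h1 : (442/625) ≤ t) (h2 : t ≤ (91/100)) : 0 ≤ (68202701/12500000) + (-(6521471/320000)) * t + (4091/200) * t ^ 2 + (-(1433/128)) * t ^ 3 + (-(1393/160)) * t ^ 4 + (387387/6400) * t ^ 5 + (-(55341/640)) * t ^ 7 + (104533/2560) * t ^ 9 := by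
  have e1 : 0 ≤ t - (442/625) := by linarith
  have e2 : 0 ≤ (91/100) - t := by linarith
  have h : (68202701/12500000) + (-(6521471/320000)) * t + (4091/200) * t ^ 2 + (-(1433/128)) * t ^ 3 + (-(1393/160)) * t ^ 4 + (387387/6400) * t ^ 5 + (-(55341/640)) * t ^ 7 + (104533/2560) * t ^ 9 =
      (2945960163534995707161365504/3689099625058962281596845) * ((t - (442/625)) ^ 0 * ((91/100) - t) ^ 9) +
      (208938216952123821729977230720/245939975003930818773123) * ((t - (442/625)) ^ 1 * ((91/100) - t) ^ 8) +
      (517037527878271549333528288000/81979991667976939591041) * ((t - (442/625)) ^ 2 * ((91/100) - t) ^ 7) +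
      (1602759797604969397130439100000/81979991667976939591041) * ((t - (442/625)) ^ 3 * ((91/100) - t) ^ 6) +
      (7984368375192019775385831875000/245939975003930818773123) * ((t - (442/625)) ^ 4 * ((91/100) - t) ^ 5) +
      (2516510651385565289224544921875/81979991667976939591041) * ((t - (442/625)) ^ 5 * ((91/100) - t) ^ 4) +
      (3938284264794770891007470703125/245939975003930818773123) * ((t - (442/625)) ^ 6 * ((91/100) - t) ^ 3) +
      (7769581572483265496090087890625/1967519800031446550184984) * ((t - (442/625)) ^ 7 * ((91/100) - t) ^ 2) +
      (467698850844150482696533203125/1748906488916841377942208) * ((t - (442/625)) ^ 8 * ((91/100) - t) ^ 1) +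
      (2756434788279502121734619140625/377763801606037737635516928) * ((t - (442/625)) ^ 9 * ((91/100) - t) ^ 0) := by
    ring
  rw [h]
  positivity

lemma kf_quad_1 (t : ℝ) (h1 : (91/100) ≤ t) (h2 : t ≤ (19/20)) : 0 ≤ (68202701/12500000) + (-(6521471/320000)) * t + (4091/200) * t ^ 2 + (-(1433/128)) * t ^ 3 + (-(1393/160)) * t ^ 4 + (387387/6400) * t ^ 5 + (-(55341/640)) * t ^ 7 + (104533/2560) * t ^ 9 := by
  have e1 : 0 ≤ t - (91/100) := by linarith
  have e2 : 0 ≤ (19/20) - t := by linarith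
  have h : (68202701/12500000) + (-(6521471/320000)) * t + (4091/200) * t ^ 2 + (-(1433/128)) * t ^ 3 + (-(1393/160)) * t ^ 4 + (387387/6400) * t ^ 5 + (-(55341/640)) * t ^ 7 + (104533/2560) * t ^ 9 =
      (10838742617081127063/671088640) * ((t - (91/100)) ^ 0 * ((19/20) - t) ^ 9) +
      (7687656768864286503/134217728) * ((t - (91/100)) ^ 1 * ((19/20) - t) ^ 8) +
      (1853005538578728635/33554432) * ((t - (91/100)) ^ 2 * ((19/20) - t) ^ 7) +
      (7389642374625526675/33554432) * ((t - (91/100)) ^ 3 * ((19/20) - t) ^ 6) +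
      (90319967024184201125/67108864) * ((t - (91/100)) ^ 4 * ((19/20) - t) ^ 5) +
      (227175777946291550625/67108864) * ((t - (91/100)) ^ 5 * ((19/20) - t) ^ 4) +
      (147794916548430759375/33554432) * ((t - (91/100)) ^ 6 * ((19/20) - t) ^ 3) +
      (107221894662087859375/33554432) * ((t - (91/100)) ^ 7 * ((19/20) - t) ^ 2) +
      (165901492517141171875/134217728) * ((t - (91/100)) ^ 8 * ((19/20) - t) ^ 1) +
      (26815502634143359375/134217728) * ((t - (91/100)) ^ 9 * ((19/20) - t) ^ 0) := by
    ring
  rw [h]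
  positivity

lemma kf_quad_2 (t : ℝ) (h1 : (19/20) ≤ t) (h2 : t ≤ 1) : 0 ≤ (68202701/12500000) + (-(6521471/320000)) * t + (4091/200) * t ^ 2 + (-(1433/128)) * t ^ 3 + (-(1393/160)) * t ^ 4 + (387387/6400) * t ^ 5 + (-(55341/640)) * t ^ 7 + (104533/2560) * t ^ 9 := by
  have e1 : 0 ≤ t - (19/20) := by linarith
  have e2 : 0 ≤ 1 - t := by linarith
  have h : (68202701/12500000) + (-(6521471/320000)) * t + (4091/200) * t ^ 2 + (-(1433/128)) * t ^ 3 + (-(1393/160)) * t ^ 4 + (387387/6400) * t ^ 5 + (-(55341/640)) * t ^ 7 + (104533/2560) * t ^ 9 =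
      (68647686743407/2560) * ((t - (19/20)) ^ 0 * (1 - t) ^ 9) +
      (42961544024957/128) * ((t - (19/20)) ^ 1 * (1 - t) ^ 8) +
      1824478615075 * ((t - (19/20)) ^ 2 * (1 - t) ^ 7) +
      5661744879015 * ((t - (19/20)) ^ 3 * (1 - t) ^ 6) +
      11078668811160 * ((t - (19/20)) ^ 4 * (1 - t) ^ 5) +
      14208499312960 * ((t - (19/20)) ^ 5 * (1 - t) ^ 4) +
      11968647408640 * ((t - (19/20)) ^ 6 * (1 - t) ^ 3) +
      6397033026560 * ((t - (19/20)) ^ 7 * (1 - t) ^ 2) +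
      1971652976640 * ((t - (19/20)) ^ 8 * (1 - t) ^ 1) +
      267349032960 * ((t - (19/20)) ^ 9 * (1 - t) ^ 0) := by
    ring
  rw [h]
  positivity

lemma kf_quad (t : ℝ) (h1 : (442/625) ≤ t) (h2 : t ≤ 1) : kf (-t) ≤ kq t := by
  have key : 0 ≤ (68202701/12500000) + (-(6521471/320000)) * t + (4091/200) * t ^ 2 + (-(1433/128)) * t ^ 3 + (-(1393/160)) * t ^ 4 + (387387/6400) * t ^ 5 + (-(55341/640)) * t ^ 7 + (104533/2560) * t ^ 9 := by
    by_cases c0 : t ≤ (91/100)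
    · exact kf_quad_0 t (by linarith) c0
    by_cases c1 : t ≤ (19/20)
    · exact kf_quad_1 t (by linarith) c1
    exact kf_quad_2 t (by linarith) (by linarith)
  rw [kf_eq]
  unfold kq
  linarith
lemma kq_two (s1 s2 : ℝ) (h1 : 442 / 625 ≤ s1) (h2 : 442 / 625 ≤ s2)
    (hq : s1 ^ 2 + s2 ^ 2 - s1 * s2 ≤ 3 / 4) : kq s1 + kq s2 ≤ 1287 / 500 := by
  unfold kq
  by_cases hc : s1 + s2 - 884 / 625 ≤ 517 / 2000
  · have hp : 0 ≤ (s1 - 442 / 625) * (s2 - 442 / 625) :=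
      mul_nonneg (by linarith) (by linarith)
    have hs : (s1 + s2 - 884 / 625) ^ 2 ≤ (517 / 2000) ^ 2 :=
      pow_le_pow_left₀ (by linarith) hc 2
    nlinarith
  · push Not at hc
    have h3 : (s1 + s2) ^ 2 ≤ 3 := by nlinarith [sq_nonneg (s1 - s2)]
    have h4 : s1 + s2 ≤ 17320509 / 10000000 := by nlinarith
    have h5 : 0 ≤ (s1 + s2 - 16729 / 10000) * (17320509 / 10000000 - (s1 + s2)) :=
      mul_nonneg (by linarith) (by linarith)
    nlinarith

lemma kq_three (s1 s2 s3 : ℝ) (h1 : 442 / 625 ≤ s1) (h2 : 442 / 625 ≤ s2) (h3 : 442 / 625 ≤ s3)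
    (hq : s1 ^ 2 + s2 ^ 2 + s3 ^ 2 - (s1 + s2 + s3) ^ 2 / 4 ≤ 1 / 2) :
    kq s1 + kq s2 + kq s3 ≤ 1287 / 500 := by
  unfold kq
  have a1 : 0 ≤ (s1 - 442 / 625) * (s2 - 442 / 625) := mul_nonneg (by linarith) (by linarith)
  have a2 : 0 ≤ (s1 - 442 / 625) * (s3 - 442 / 625) := mul_nonneg (by linarith) (by linarith)
  have a3 : 0 ≤ (s2 - 442 / 625) * (s3 - 442 / 625) := mul_nonneg (by linarith) (by linarith)
  by_cases hc : s1 + s2 + s3 - 1326 / 625 ≤ 1 / 4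
  · have hs : (s1 + s2 + s3 - 1326 / 625) ^ 2 ≤ (1 / 4) ^ 2 :=
      pow_le_pow_left₀ (by linarith) hc 2
    nlinarith
  · push Not at hc
    have b3 : (s1 + s2 + s3) ^ 2 ≤ 6 := by
      nlinarith [sq_nonneg (s1 - s2), sq_nonneg (s1 - s3), sq_nonneg (s2 - s3)]
    have b4 : s1 + s2 + s3 ≤ 24495 / 10000 := by nlinarith
    have b5 : 0 ≤ (s1 + s2 + s3 - 23716 / 10000) * (24495 / 10000 - (s1 + s2 + s3)) :=
      mul_nonneg (by linarith) (by linarith)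
    nlinarith

/-- Coordinate inner product. -/
def ip (a b : EuclideanSpace ℝ (Fin 3)) : ℝ := a 0 * b 0 + a 1 * b 1 + a 2 * b 2

lemma ip_comm (a b : EuclideanSpace ℝ (Fin 3)) : ip a b = ip b a := by
  unfold ip; ring

/-- Coordinate determinant. -/
def dt (a b c : EuclideanSpace ℝ (Fin 3)) : ℝ :=
  a 0 * (b 1 * c 2 - b 2 * c 1) - a 1 * (b 0 * c 2 - b 2 * c 0) + a 2 * (b 0 * c 1 - b 1 * c 0)

lemma dt_mul (e a b c : EuclideanSpace ℝ (Fin 3)) :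
    dt e a b * dt e a c =
      ip e e * (ip a a * ip b c - ip a c * ip b a)
      - ip e a * (ip a e * ip b c - ip a c * ip b e)
      + ip e c * (ip a e * ip b a - ip a a * ip b e) := by
  unfold dt ip; ring

lemma quad_nonneg (e x y z : EuclideanSpace ℝ (Fin 3)) (k a b c : ℝ) :
    0 ≤ k ^ 2 * ip e e + a ^ 2 * ip x x + b ^ 2 * ip y y + c ^ 2 * ip z z
      + 2 * k * a * ip e x + 2 * k * b * ip e y + 2 * k * c * ip e z
      + 2 * a * b * ip x y + 2 * a * c * ip x z + 2 * b * c * ip y z := by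
  have h : k ^ 2 * ip e e + a ^ 2 * ip x x + b ^ 2 * ip y y + c ^ 2 * ip z z
      + 2 * k * a * ip e x + 2 * k * b * ip e y + 2 * k * c * ip e z
      + 2 * a * b * ip x y + 2 * a * c * ip x z + 2 * b * c * ip y z
      = (k * e 0 + a * x 0 + b * y 0 + c * z 0) ^ 2 + (k * e 1 + a * x 1 + b * y 1 + c * z 1) ^ 2
        + (k * e 2 + a * x 2 + b * y 2 + c * z 2) ^ 2 := by
    unfold ip; ring
  rw [h]
  positivity

lemma ip_ge (e x : EuclideanSpace ℝ (Fin 3)) (he : ip e e = 1) (hx : ip x x = 1) :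
    -1 ≤ ip e x := by
  have h := quad_nonneg e x x x 1 1 0 0
  rw [he, hx] at h
  linarith

lemma constr_three (e x y z : EuclideanSpace ℝ (Fin 3)) (he : ip e e = 1) (hx : ip x x = 1)
    (hy : ip y y = 1) (hz : ip z z = 1) (hxy : ip x y ≤ 1 / 2) (hxz : ip x z ≤ 1 / 2)
    (hyz : ip y z ≤ 1 / 2) (h1 : ip e x < -(442 / 625)) (h2 : ip e y < -(442 / 625))
    (h3 : ip e z < -(442 / 625)) :
    (-ip e x) ^ 2 + (-ip e y) ^ 2 + (-ip e z) ^ 2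
      - (-ip e x + -ip e y + -ip e z) ^ 2 / 4 ≤ 1 / 2 := by
  have g1 := ip_ge e x he hx
  have g2 := ip_ge e y he hy
  have g3 := ip_ge e z he hz
  obtain ⟨s, hs⟩ : ∃ s, s = -ip e x := ⟨_, rfl⟩
  obtain ⟨t, ht⟩ : ∃ t, t = -ip e y := ⟨_, rfl⟩
  obtain ⟨u, hu⟩ : ∃ u, u = -ip e z := ⟨_, rfl⟩
  rw [← hs, ← ht, ← hu]
  obtain ⟨Q, hQ⟩ : ∃ Q, Q = 2 * (s ^ 2 + t ^ 2 + u ^ 2 - (s + t + u) ^ 2 / 4) := ⟨_, rfl⟩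
  obtain ⟨a, ha⟩ : ∃ a, a = 2 * (s - (s + t + u) / 4) := ⟨_, rfl⟩
  obtain ⟨b, hb⟩ : ∃ b, b = 2 * (t - (s + t + u) / 4) := ⟨_, rfl⟩
  obtain ⟨c, hc⟩ : ∃ c, c = 2 * (u - (s + t + u) / 4) := ⟨_, rfl⟩
  have pa : 0 ≤ a := by linarith
  have pb : 0 ≤ b := by linarith
  have pc : 0 ≤ c := by linarith
  have key := quad_nonneg e x y z Q a b c
  have ex : ip e x = -s := by linarith
  have ey : ip e y = -t := by linarith
  have ez : ip e z = -u := by linarith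
  rw [he, hx, hy, hz, ex, ey, ez] at key
  have k1 := mul_le_mul_of_nonneg_left hxy (mul_nonneg pa pb)
  have k2 := mul_le_mul_of_nonneg_left hxz (mul_nonneg pa pc)
  have k3 := mul_le_mul_of_nonneg_left hyz (mul_nonneg pb pc)
  have k4 : a * s + b * t + c * u = Q := by rw [ha, hb, hc, hQ]; ring
  have k5 : a ^ 2 + b ^ 2 + c ^ 2 + a * b + a * c + b * c = Q := by rw [ha, hb, hc, hQ]; ring
  have k6 : 0 ≤ Q - Q ^ 2 := by
    have : Q * (a * s + b * t + c * u) = Q * Q := by rw [k4]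
    nlinarith
  have k7 : Q ≤ 1 := by
    by_contra hcon
    push Not at hcon
    nlinarith
  linarith

lemma constr_two (e x y : EuclideanSpace ℝ (Fin 3)) (he : ip e e = 1) (hx : ip x x = 1)
    (hy : ip y y = 1) (hxy : ip x y ≤ 1 / 2)
    (h1 : ip e x < -(442 / 625)) (h2 : ip e y < -(442 / 625)) :
    (-ip e x) ^ 2 + (-ip e y) ^ 2 - (-ip e x) * (-ip e y) ≤ 3 / 4 := by
  have g1 := ip_ge e x he hx
  have g2 := ip_ge e y he hy
  obtain ⟨s, hs⟩ : ∃ s, s = -ip e x := ⟨_, rfl⟩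
  obtain ⟨t, ht⟩ : ∃ t, t = -ip e y := ⟨_, rfl⟩
  rw [← hs, ← ht]
  obtain ⟨Q, hQ⟩ : ∃ Q, Q = 4 / 3 * (s ^ 2 + t ^ 2 - s * t) := ⟨_, rfl⟩
  obtain ⟨a, ha⟩ : ∃ a, a = 2 * (s - (s + t) / 3) := ⟨_, rfl⟩
  obtain ⟨b, hb⟩ : ∃ b, b = 2 * (t - (s + t) / 3) := ⟨_, rfl⟩
  have pa : 0 ≤ a := by linarith
  have pb : 0 ≤ b := by linarith
  have key := quad_nonneg e x y y Q a b 0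
  have ex : ip e x = -s := by linarith
  have ey : ip e y = -t := by linarith
  rw [he, hx, hy, ex, ey] at key
  have k1 := mul_le_mul_of_nonneg_left hxy (mul_nonneg pa pb)
  have k4 : a * s + b * t = Q := by rw [ha, hb, hQ]; ring
  have k5 : a ^ 2 + b ^ 2 + a * b = Q := by rw [ha, hb, hQ]; ring
  have k6 : 0 ≤ Q - Q ^ 2 := by
    have : Q * (a * s + b * t) = Q * Q := by rw [k4]
    nlinarith
  have k7 : Q ≤ 1 := by
    by_contra hcon
    push Not at hcon
    nlinarith
  linarith

lemma dt_neg (e a b c : EuclideanSpace ℝ (Fin 3)) (he : ip e e = 1) (ha : ip a a = 1)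
    (hab : ip a b ≤ 1 / 2) (hac : ip a c ≤ 1 / 2) (hbc : ip b c ≤ 1 / 2)
    (h1 : ip e a < -(442 / 625)) (h2 : ip e b < -(442 / 625)) (h3 : ip e c < -(442 / 625)) :
    dt e a b * dt e a c < 0 := by
  have g1 := ip_ge e a he ha
  rw [dt_mul, he, ha, ip_comm b a, ip_comm a e, ip_comm b e]
  have m1 : 1 / 2 < ip e b * ip e c := by nlinarith
  have m2 : 1 / 2 < ip e a * ip e c := by nlinarith
  have m3 : 1 / 2 < ip e a * ip e b := by nlinarith
  have n1 : 0 < (ip e a * ip e c - ip a c) * (ip e a * ip e b - ip a b) :=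
    mul_pos (by linarith) (by linarith)
  have n2 : 0 ≤ (1 - ip e a ^ 2) * (ip e b * ip e c - ip b c) :=
    mul_nonneg (by nlinarith) (by linarith)
  nlinarith

lemma no_four (e a b c d : EuclideanSpace ℝ (Fin 3)) (he : ip e e = 1) (ha : ip a a = 1)
    (hab : ip a b ≤ 1 / 2) (hac : ip a c ≤ 1 / 2) (had : ip a d ≤ 1 / 2) (hbc : ip b c ≤ 1 / 2)
    (hbd : ip b d ≤ 1 / 2) (hcd : ip c d ≤ 1 / 2)
    (h1 : ip e a < -(442 / 625)) (h2 : ip e b < -(442 / 625)) (h3 : ip e c < -(442 / 625))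
    (h4 : ip e d < -(442 / 625)) : False := by
  have p1 := dt_neg e a b c he ha hab hac hbc h1 h2 h3
  have p2 := dt_neg e a b d he ha hab had hbd h1 h2 h4
  have p3 := dt_neg e a c d he ha hac had hcd h1 h3 h4
  have p4 := mul_pos_of_neg_of_neg p1 p2
  nlinarith [mul_neg_of_pos_of_neg p4 p3, sq_nonneg (dt e a b * dt e a c * dt e a d)]

lemma local_bound (S : Finset (EuclideanSpace ℝ (Fin 3))) (h1 : ∀ x ∈ S, ip x x = 1)
    (h2 : ∀ x ∈ S, ∀ y ∈ S, x ≠ y → ip x y ≤ 1 / 2) (e : EuclideanSpace ℝ (Fin 3)) (heS : e ∈ S) :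
    ∑ y ∈ S, kf (ip e y) ≤ 13 - 1 / 1000 := by
  have he := h1 e heS
  rw [← Finset.add_sum_erase S _ heS, he]
  have hk1 : kf 1 = 13 - 103 / 40 := by rw [kf_eq]; norm_num
  rw [hk1]
  suffices hsuff : ∑ y ∈ S.erase e, kf (ip e y) ≤ 1287 / 500 by linarith
  set C := (S.erase e).filter fun y => ip e y < -(442 / 625) with hC
  have hle : ∑ y ∈ S.erase e, kf (ip e y) ≤ ∑ y ∈ C, kf (ip e y) := by
    rw [← Finset.sum_filter_add_sum_filter_not (S.erase e) fun y => ip e y < -(442 / 625)]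
    have : ∑ y ∈ (S.erase e).filter (fun y => ¬ ip e y < -(442 / 625)), kf (ip e y) ≤ 0 := by
      refine Finset.sum_nonpos fun y hy => ?_
      rw [Finset.mem_filter, Finset.mem_erase] at hy
      exact kf_nonpos _ (by linarith [not_lt.mp hy.2])
        (by linarith [h2 e heS y hy.1.2 (Ne.symm hy.1.1)])
    linarith
  refine hle.trans ?_
  have hCS : ∀ y ∈ C, y ∈ S := fun y hy => by
    rw [hC, Finset.mem_filter, Finset.mem_erase] at hy
    exact hy.1.2
  have hCt : ∀ y ∈ C, ip e y < -(442 / 625) := fun y hy => by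
    rw [hC, Finset.mem_filter, Finset.mem_erase] at hy
    exact hy.2
  have hCq : ∀ y ∈ C, kf (ip e y) ≤ kq (-ip e y) := fun y hy => by
    have := kf_quad (-ip e y) (by linarith [hCt y hy])
      (by linarith [ip_ge e y he (h1 y (hCS y hy))])
    rwa [neg_neg] at this
  have hCd : ∀ x ∈ C, ∀ y ∈ C, x ≠ y → ip x y ≤ 1 / 2 := fun x hx y hy hne =>
    h2 x (hCS x hx) y (hCS y hy) hne
  have hcard : C.card ≤ 3 := by
    by_contra hcon
    push Not at hcon
    obtain ⟨a, haC⟩ : C.Nonempty := Finset.card_pos.mp (by omega)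
    have h3 : 2 < (C.erase a).card := by rw [Finset.card_erase_of_mem haC]; omega
    obtain ⟨b, c, d, hb, hc, hd, hbc, hbd, hcd⟩ := Finset.two_lt_card_iff.mp h3
    rw [Finset.mem_erase] at hb hc hd
    exact no_four e a b c d he (h1 a (hCS a haC)) (hCd a haC b hb.2 hb.1.symm)
      (hCd a haC c hc.2 hc.1.symm) (hCd a haC d hd.2 hd.1.symm) (hCd b hb.2 c hc.2 hbc)
      (hCd b hb.2 d hd.2 hbd) (hCd c hc.2 d hd.2 hcd) (hCt a haC) (hCt b hb.2) (hCt c hc.2)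
      (hCt d hd.2)
  obtain h0 | h0 | h0 | h0 : C.card = 0 ∨ C.card = 1 ∨ C.card = 2 ∨ C.card = 3 := by omega
  · rw [Finset.card_eq_zero.mp h0]
    norm_num
  · obtain ⟨a, ha⟩ := Finset.card_eq_one.mp h0
    have haC : a ∈ C := by rw [ha]; simp
    rw [ha, Finset.sum_singleton]
    have := kf_one (-ip e a) (by linarith [hCt a haC])
      (by linarith [ip_ge e a he (h1 a (hCS a haC))])
    rwa [neg_neg] at this
  · obtain ⟨a, b, hab, hCe⟩ := Finset.card_eq_two.mp h0
    have haC : a ∈ C := by rw [hCe]; simp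
    have hbC : b ∈ C := by rw [hCe]; simp
    rw [hCe, Finset.sum_pair hab]
    have := kq_two (-ip e a) (-ip e b) (by linarith [hCt a haC]) (by linarith [hCt b hbC])
      (constr_two e a b he (h1 a (hCS a haC)) (h1 b (hCS b hbC)) (hCd a haC b hbC hab)
        (hCt a haC) (hCt b hbC))
    linarith [hCq a haC, hCq b hbC]
  · obtain ⟨a, b, c, hab, hac, hbc, hCe⟩ := Finset.card_eq_three.mp h0
    have haC : a ∈ C := by rw [hCe]; simp
    have hbC : b ∈ C := by rw [hCe]; simp
    have hcC : c ∈ C := by rw [hCe]; simp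
    have hsum : ∑ y ∈ C, kf (ip e y) = kf (ip e a) + kf (ip e b) + kf (ip e c) := by
      rw [hCe, Finset.sum_insert (by simp [hab, hac]), Finset.sum_pair hbc]
      ring
    rw [hsum]
    have := kq_three (-ip e a) (-ip e b) (-ip e c) (by linarith [hCt a haC])
      (by linarith [hCt b hbC]) (by linarith [hCt c hcC])
      (constr_three e a b c he (h1 a (hCS a haC)) (h1 b (hCS b hbC)) (h1 c (hCS c hcC))
        (hCd a haC b hbC hab) (hCd a haC c hcC hac) (hCd b hbC c hcC hbc)
        (hCt a haC) (hCt b hbC) (hCt c hcC))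
    linarith [hCq a haC, hCq b hbC, hCq c hcC]

/-- Planar part of a vector as a complex number. -/
def cw (x : EuclideanSpace ℝ (Fin 3)) : ℂ := ⟨x 0, x 1⟩

lemma ip_eq (x y : EuclideanSpace ℝ (Fin 3)) :
    ip x y = x 2 * y 2 + (cw x * (starRingEnd ℂ) (cw y)).re := by
  simp [ip, cw, Complex.mul_re]
  ring

lemma normSq_eq (x y : EuclideanSpace ℝ (Fin 3)) (hx : ip x x = 1) (hy : ip y y = 1) :
    Complex.normSq (cw x * (starRingEnd ℂ) (cw y)) = (1 - x 2 ^ 2) * (1 - y 2 ^ 2) := by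
  have e1 : 1 - x 2 ^ 2 = Complex.normSq (cw x) := by
    rw [← hx]; simp [ip, cw, Complex.normSq_apply]; ring
  have e2 : 1 - y 2 ^ 2 = Complex.normSq (cw y) := by
    rw [← hy]; simp [ip, cw, Complex.normSq_apply]; ring
  rw [map_mul, Complex.normSq_conj, e1, e2]

lemma leg1_psd (S : Finset (EuclideanSpace ℝ (Fin 3))) (h1 : ∀ x ∈ S, ip x x = 1) :
    0 ≤ ∑ x ∈ S, ∑ y ∈ S, leg1 (ip x y) :=
  psd_of_expansion S (fun x => x 2) cw (fun x y => leg1 (ip x y)) 2 coef1 coef1_nonneg quo1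
    fun x hx y hy => by
      simp only [ip_eq x y]
      exact leg1_expand _ _ _ (normSq_eq x y (h1 x hx) (h1 y hy))

lemma leg2_psd (S : Finset (EuclideanSpace ℝ (Fin 3))) (h1 : ∀ x ∈ S, ip x x = 1) :
    0 ≤ ∑ x ∈ S, ∑ y ∈ S, leg2 (ip x y) :=
  psd_of_expansion S (fun x => x 2) cw (fun x y => leg2 (ip x y)) 3 coef2 coef2_nonneg quo2
    fun x hx y hy => by
      simp only [ip_eq x y]
      exact leg2_expand _ _ _ (normSq_eq x y (h1 x hx) (h1 y hy))

lemma leg3_psd (S : Finset (EuclideanSpace ℝ (Fin 3))) (h1 : ∀ x ∈ S, ip x x = 1) :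
    0 ≤ ∑ x ∈ S, ∑ y ∈ S, leg3 (ip x y) :=
  psd_of_expansion S (fun x => x 2) cw (fun x y => leg3 (ip x y)) 4 coef3 coef3_nonneg quo3
    fun x hx y hy => by
      simp only [ip_eq x y]
      exact leg3_expand _ _ _ (normSq_eq x y (h1 x hx) (h1 y hy))

lemma leg4_psd (S : Finset (EuclideanSpace ℝ (Fin 3))) (h1 : ∀ x ∈ S, ip x x = 1) :
    0 ≤ ∑ x ∈ S, ∑ y ∈ S, leg4 (ip x y) :=
  psd_of_expansion S (fun x => x 2) cw (fun x y => leg4 (ip x y)) 5 coef4 coef4_nonneg quo4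
    fun x hx y hy => by
      simp only [ip_eq x y]
      exact leg4_expand _ _ _ (normSq_eq x y (h1 x hx) (h1 y hy))

lemma leg9_psd (S : Finset (EuclideanSpace ℝ (Fin 3))) (h1 : ∀ x ∈ S, ip x x = 1) :
    0 ≤ ∑ x ∈ S, ∑ y ∈ S, leg9 (ip x y) :=
  psd_of_expansion S (fun x => x 2) cw (fun x y => leg9 (ip x y)) 10 coef9 coef9_nonneg quo9
    fun x hx y hy => by
      simp only [ip_eq x y]
      exact leg9_expand _ _ _ (normSq_eq x y (h1 x hx) (h1 y hy))

lemma kf_sum_ge (S : Finset (EuclideanSpace ℝ (Fin 3))) (h1 : ∀ x ∈ S, ip x x = 1) :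
    (S.card : ℝ) ^ 2 ≤ ∑ x ∈ S, ∑ y ∈ S, kf (ip x y) := by
  have p1 := leg1_psd S h1
  have p2 := leg2_psd S h1
  have p3 := leg3_psd S h1
  have p4 := leg4_psd S h1
  have p9 := leg9_psd S h1
  simp only [kf, Finset.sum_add_distrib, ← Finset.mul_sum, Finset.sum_const, nsmul_eq_mul]
  nlinarith

lemma core (S : Finset (EuclideanSpace ℝ (Fin 3))) (h1 : ∀ x ∈ S, ip x x = 1)
    (h2 : ∀ x ∈ S, ∀ y ∈ S, x ≠ y → ip x y ≤ 1 / 2) : S.card ≤ 12 := by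
  by_contra hcon
  push Not at hcon
  have hn : (13 : ℝ) ≤ S.card := by exact_mod_cast hcon
  have a1 := kf_sum_ge S h1
  have a2 : ∑ x ∈ S, ∑ y ∈ S, kf (ip x y) ≤ ∑ _x ∈ S, ((13 : ℝ) - 1 / 1000) :=
    Finset.sum_le_sum fun x hx => local_bound S h1 h2 x hx
  rw [Finset.sum_const, nsmul_eq_mul] at a2
  nlinarith

lemma dist_sq_eq (x y : EuclideanSpace ℝ (Fin 3)) :
    dist x y ^ 2 = (x 0 - y 0) ^ 2 + (x 1 - y 1) ^ 2 + (x 2 - y 2) ^ 2 := by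
  rw [EuclideanSpace.dist_sq_eq, Fin.sum_univ_three]
  simp [Real.dist_eq, sq_abs]

/-- The kissing number bound in `ℝ³`: in any finite packing of unit balls, each ball
touches at most `12` other balls of the packing. -/
theorem kissing_bound_space (P : Finset (EuclideanSpace ℝ (Fin 3)))
    (hpack : ∀ x ∈ P, ∀ y ∈ P, x ≠ y → 2 ≤ dist x y) :
    ∀ x ∈ P, (P.filter fun y => dist x y = 2).card ≤ 12 := by
  intro x _
  have hinj : Function.Injective
      (fun y : EuclideanSpace ℝ (Fin 3) => (1 / 2 : ℝ) • (y - x)) := by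
    intro y z h
    have h' : (1 / 2 : ℝ) • (y - x) = (1 / 2 : ℝ) • (z - x) := h
    have := smul_right_injective (EuclideanSpace ℝ (Fin 3)) (by norm_num : (1 / 2 : ℝ) ≠ 0) h'
    exact sub_left_injective this
  rw [← Finset.card_image_of_injective _ hinj]
  have hd : ∀ y, dist x y = 2 →
      (x 0 - y 0) ^ 2 + (x 1 - y 1) ^ 2 + (x 2 - y 2) ^ 2 = 4 := by
    intro y hy
    rw [← dist_sq_eq, hy]
    norm_num
  apply core
  · intro v hv
    obtain ⟨y, hy, rfl⟩ := Finset.mem_image.mp hv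
    have := hd y (Finset.mem_filter.mp hy).2
    simp only [ip, PiLp.smul_apply, PiLp.sub_apply, smul_eq_mul]
    linarith
  · intro v hv w hw hne
    obtain ⟨y, hy, rfl⟩ := Finset.mem_image.mp hv
    obtain ⟨z, hz, rfl⟩ := Finset.mem_image.mp hw
    have hyz : y ≠ z := fun h => hne (by rw [h])
    have d1 := hd y (Finset.mem_filter.mp hy).2
    have d2 := hd z (Finset.mem_filter.mp hz).2
    have d3 := hpack y (Finset.mem_filter.mp hy).1 z (Finset.mem_filter.mp hz).1 hyz
    have d4 : (4 : ℝ) ≤ dist y z ^ 2 := by nlinarith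
    rw [dist_sq_eq] at d4
    simp only [ip, PiLp.smul_apply, PiLp.sub_apply, smul_eq_mul]
    linarith
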